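/- (Zangwill's global convergence theorem.) Let Phi be a point-to-set map from R^D to subsets of R^D, let (x_k) be a sequence with x_{k+1} in Phi(x_k) for all k, and let Gamma be a subset of R^D (the solution set). Assume: (1) all x_k lie in a compact set S contained in R^D; (2) Phi is closed on the complement of Gamma, i.e., for every x* not in Gamma, whenever x_k -> x*, y_k in Phi(x_k), and y_k -> y*, one has y* in Phi(x*); (3) there is a continuous function alpha : R^D -> R such that alpha(x') > alpha(x) for all x' in Phi(x) whenever x is not in Gamma, and alpha(x') >= alpha(x) for all x' in Phi(x) whenever x is in Gamma. Then every limit point of (x_k) lies in Gamma, and alpha(x_k) converges monotonically to alpha(x*) for some x* in Gamma. -/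

import Mathlib

/-!
Let `p` be a limit point of `x`. Along an ultrafilter on which `x k → p`, compactness makes the
successors `x (k + 1)` converge to some `q`, which is again a limit point of `x`. If `p ∉ Γ`, then
closedness of `Φ` at `p` gives `q ∈ Φ p` and hence `α p < α q`. But `α ∘ x` is monotone, so its
only possible limit point is its supremum, and `α p = α q`.
-/

open Filter Set Topology

section ClusterPoints

variable {ι X Y : Type*} [TopologicalSpace X] [TopologicalSpace Y]

theorem mem_of_isClosed_of_mapClusterPt {s : Set X} {l : Filter ι} {u : ι → X} {p : X}
    (hs : IsClosed s) (hu : ∀ᶠ i in l, u i ∈ s) (hp : MapClusterPt p l u) : p ∈ s :=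
  isClosed_iff_clusterPt.1 hs p (ClusterPt.mono hp (tendsto_principal.2 hu))

theorem exists_mapClusterPt_prodMk_of_isCompact {K : Set Y} {l : Filter ι} {u : ι → X}
    {v : ι → Y} {p : X} (hK : IsCompact K) (hv : ∀ᶠ i in l, v i ∈ K) (hp : MapClusterPt p l u) :
    ∃ q, MapClusterPt (p, q) l fun i => (u i, v i) := by
  obtain ⟨U, hUl, hUp⟩ := mapClusterPt_iff_ultrafilter.1 hp
  obtain ⟨q, -, hUq⟩ := hK.ultrafilter_le_nhds (U.map v) (tendsto_principal.2 (hUl hv))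
  exact ⟨q, mapClusterPt_iff_ultrafilter.2 ⟨U, hUl, hUp.prodMk_nhds hUq⟩⟩

theorem isLUB_range_of_mapClusterPt_atTop [Preorder ι] [Preorder X] [OrderClosedTopology X]
    {f : ι → X} {a : X} (hf : Monotone f) (ha : MapClusterPt a atTop f) : IsLUB (range f) a := by
  constructor
  · rintro _ ⟨i, rfl⟩
    have hif : ∀ᶠ j in atTop, f j ∈ Ici (f i) := (eventually_ge_atTop i).mono fun _ hij => hf hij
    exact mem_Ici.1 (mem_of_isClosed_of_mapClusterPt isClosed_Ici hif ha)
  · intro b hb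
    have hfb : ∀ᶠ i in atTop, f i ∈ Iic b := Eventually.of_forall fun i => hb (mem_range_self i)
    exact mem_Iic.1 (mem_of_isClosed_of_mapClusterPt isClosed_Iic hfb ha)

end ClusterPoints

section PointToSetMaps

variable {X Y : Type*} [TopologicalSpace X] [TopologicalSpace Y]

/-- A point-to-set map `Φ` is closed at `p`: the fibre over `p` of the closure of its graph is
contained in `Φ p`. Using the closure of the graph instead of sequences makes the notion suitable
for arbitrary topological spaces. -/
def HasClosedGraphAt (Φ : X → Set Y) (p : X) : Prop :=
  ∀ q, (p, q) ∈ closure {z : X × Y | z.2 ∈ Φ z.1} → q ∈ Φ p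

theorem hasClosedGraphAt_iff_seq [FrechetUrysohnSpace (X × Y)] {Φ : X → Set Y} {p : X} :
    HasClosedGraphAt Φ p ↔ ∀ (u : ℕ → X) (y : ℕ → Y) (q : Y), Tendsto u atTop (𝓝 p) →
      (∀ k, y k ∈ Φ (u k)) → Tendsto y atTop (𝓝 q) → q ∈ Φ p := by
  constructor
  · intro h u y q hu hy hq
    exact h q (mem_closure_iff_seq_limit.2 ⟨fun k => (u k, y k), hy, hu.prodMk_nhds hq⟩)
  · intro h q hq
    obtain ⟨z, hzΦ, hz⟩ := mem_closure_iff_seq_limit.1 hq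
    exact h _ _ q hz.fst_nhds hzΦ hz.snd_nhds

theorem HasClosedGraphAt.exists_mem_mapClusterPt {Φ : X → Set X} {x : ℕ → X} {K : Set X} {p : X}
    (hΦ : HasClosedGraphAt Φ p) (hx : ∀ k, x (k + 1) ∈ Φ (x k)) (hK : IsCompact K)
    (hxK : ∀ k, x k ∈ K) (hp : MapClusterPt p atTop x) :
    ∃ q ∈ Φ p, MapClusterPt q atTop x := by
  obtain ⟨q, hpq⟩ := exists_mapClusterPt_prodMk_of_isCompact hK
    (Eventually.of_forall fun k => hxK (k + 1)) hp
  have hq_succ : MapClusterPt q atTop fun k => x (k + 1) :=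
    hpq.continuousAt_comp continuousAt_snd
  have hq_graph : (p, q) ∈ closure {z : X × X | z.2 ∈ Φ z.1} :=
    mem_of_isClosed_of_mapClusterPt isClosed_closure
      (Eventually.of_forall fun k => subset_closure (hx k)) hpq
  exact ⟨q, hΦ q hq_graph, hq_succ.of_comp (tendsto_add_atTop_nat 1)⟩

end PointToSetMaps

theorem zangwill_global_convergence_general {X β : Type*} [TopologicalSpace X]
    [TopologicalSpace β] [PartialOrder β] [OrderClosedTopology β] [SupConvergenceClass β]
    {Φ : X → Set X} {x : ℕ → X} (hx : ∀ k, x (k + 1) ∈ Φ (x k))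
    {Γ K : Set X} (hK : IsCompact K) (hxK : ∀ k, x k ∈ K)
    (hclosed : ∀ p ∉ Γ, HasClosedGraphAt Φ p)
    {α : X → β} (hα : Continuous α)
    (hinc : ∀ z ∉ Γ, ∀ z' ∈ Φ z, α z < α z')
    (hmono : ∀ z ∈ Γ, ∀ z' ∈ Φ z, α z ≤ α z') :
    (∀ p, MapClusterPt p atTop x → p ∈ Γ) ∧
    ∃ p ∈ Γ, Monotone (fun k => α (x k)) ∧ Tendsto (fun k => α (x k)) atTop (𝓝 (α p)) := by
  have hαx : Monotone fun k => α (x k) := monotone_nat_of_le_succ fun k =>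
    (em (x k ∈ Γ)).elim (fun h => hmono _ h _ (hx k)) fun h => (hinc _ h _ (hx k)).le
  have hlub {p : X} (hp : MapClusterPt p atTop x) : IsLUB (range fun k => α (x k)) (α p) :=
    isLUB_range_of_mapClusterPt_atTop hαx (hp.continuousAt_comp hα.continuousAt)
  have hΓ : ∀ p, MapClusterPt p atTop x → p ∈ Γ := by
    intro p hp
    by_contra hpΓ
    obtain ⟨q, hqΦ, hq⟩ := (hclosed p hpΓ).exists_mem_mapClusterPt hx hK hxK hp
    exact (hinc p hpΓ q hqΦ).ne ((hlub hp).unique (hlub hq))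
  obtain ⟨p, -, hp⟩ : ∃ p ∈ K, MapClusterPt p atTop x :=
    hK.exists_mapClusterPt (tendsto_principal.2 (Eventually.of_forall hxK))
  exact ⟨hΓ, p, hΓ p hp, hαx, tendsto_atTop_isLUB hαx (hlub hp)⟩

/-- **Zangwill's global convergence theorem.**  Let `Φ` be a
point-to-set map on `ℝ^D`, let `(x k)` satisfy `x (k+1) ∈ Φ (x k)`, and let
`Γ` be a solution set.  Suppose (1) all iterates lie in a compact set `K`,
(2) `Φ` is closed on the complement of `Γ`, and (3) there is a continuous
`α : ℝ^D → ℝ` which strictly increases along `Φ` outside `Γ` and does not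
decrease along `Φ` on `Γ`.  Then every limit point of `(x k)` lies in `Γ`,
and `α (x k)` converges monotonically to `α x*` for some `x* ∈ Γ`. -/
theorem zangwill_global_convergence {D : ℕ}
    (Φ : (Fin D → ℝ) → Set (Fin D → ℝ))
    (x : ℕ → Fin D → ℝ)
    (hx : ∀ k, x (k + 1) ∈ Φ (x k))
    (Γ : Set (Fin D → ℝ))
    (K : Set (Fin D → ℝ)) (hK : IsCompact K) (hxK : ∀ k, x k ∈ K)
    (hclosed : ∀ xstar ∉ Γ, ∀ (u y : ℕ → Fin D → ℝ) (ystar : Fin D → ℝ),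
      Filter.Tendsto u Filter.atTop (nhds xstar) →
      (∀ k, y k ∈ Φ (u k)) →
      Filter.Tendsto y Filter.atTop (nhds ystar) →
      ystar ∈ Φ xstar)
    (α : (Fin D → ℝ) → ℝ) (hα : Continuous α)
    (hinc : ∀ z ∉ Γ, ∀ z' ∈ Φ z, α z < α z')
    (hmono : ∀ z ∈ Γ, ∀ z' ∈ Φ z, α z ≤ α z') :
    (∀ p : Fin D → ℝ, MapClusterPt p Filter.atTop x → p ∈ Γ) ∧
    ∃ xstar ∈ Γ, Monotone (fun k => α (x k)) ∧
      Filter.Tendsto (fun k => α (x k)) Filter.atTop (nhds (α xstar)) := by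
  exact zangwill_global_convergence_general hx hK hxK
    (fun p hp => hasClosedGraphAt_iff_seq.2 (hclosed p hp)) hα hinc hmono
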